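/- arXiv:cs/0509032 — 2 statements merged into one kernel-verified Lean document; each statement's English description precedes it below -/
import Mathlib

section
/- Let k ≥ 2 be an integer and let α > 0, r > 0 and 0 < p < 1 be real constants with r > -α/ln(1-p). Then the probability that a random instance of RB(k,n,α,r,p) is satisfiable tends to 0 as n → ∞. -/
/-!
This is the first moment method. A fixed assignment satisfies a uniformly random constraint with
probability `1 - q / d ^ k ≤ 1 - p`, so a union bound over the `d ^ n` assignments bounds the
probability of satisfiability by `d ^ n * (1 - p) ^ m`. For `d = ⌈n ^ α⌉` and `m = ⌈r n log n⌉`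
this is at most `(2 * n ^ (α + r * log (1 - p))) ^ n`, and above the threshold the exponent
`α + r * log (1 - p)` is negative.
-/

namespace RB

/-- A (raw) constraint over `n` variables with common domain `Fin d`:
a scope (set of variables) together with a set of forbidden tuples,
i.e. forbidden functions from the scope to the domain. -/
abbrev Constraint (n d : ℕ) : Type := Σ s : Finset (Fin n), Finset (↥s → Fin d)

/-- A constraint of model RB: scope of exactly `k` variables and exactly `q` forbidden tuples. -/
abbrev ValidConstraint (k n d q : ℕ) : Type :=
  {c : Constraint n d // c.1.card = k ∧ c.2.card = q}

/-- An instance of model RB: a sequence of `m` constraints (chosen with repetition). -/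
abbrev Instance (k n d q m : ℕ) : Type := Fin m → ValidConstraint k n d q

/-- An assignment satisfies a constraint iff the tuple it induces on the scope is not forbidden. -/
def satisfies {n d : ℕ} (a : Fin n → Fin d) (c : Constraint n d) : Prop :=
  (fun i : ↥c.1 => a i.1) ∉ c.2

/-- An assignment satisfies an instance iff it satisfies all its constraints. -/
def satInstance {k n d q m : ℕ} (a : Fin n → Fin d) (P : Instance k n d q m) : Prop :=
  ∀ i : Fin m, satisfies a (P i).1

open scoped Classical in
/-- The probability (uniform over instances, i.e. constraints chosen independently,
uniformly and with repetition) that a random instance is satisfiable. -/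
noncomputable def prSat (k n d q m : ℕ) : ℝ :=
  ((Finset.univ.filter fun P : Instance k n d q m =>
      ∃ a : Fin n → Fin d, satInstance a P).card : ℝ)
    / (Fintype.card (Instance k n d q m))

/-- Domain size `d = ⌈n^α⌉`. -/
noncomputable def dOf (α : ℝ) (n : ℕ) : ℕ := ⌈(n : ℝ) ^ α⌉₊

/-- Number of constraints `m = ⌈r · n · ln n⌉`. -/
noncomputable def mOf (r : ℝ) (n : ℕ) : ℕ := ⌈r * n * Real.log n⌉₊

/-- Number of forbidden tuples `q = ⌈p · d^k⌉`. -/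
noncomputable def qOf (p : ℝ) (k d : ℕ) : ℕ := ⌈p * (d : ℝ) ^ k⌉₊

/-- Probability that a random instance of `RB(k,n,α,r,p)` is satisfiable. -/
noncomputable def prSatRB (k : ℕ) (α r p : ℝ) (n : ℕ) : ℝ :=
  prSat k n (dOf α n) (qOf p k (dOf α n)) (mOf r n)

end RB

open Filter Topology

section Counting

open Finset

variable {T : Type*} [DecidableEq T] {s : Finset T} {t : T}

lemma powersetCard_filter_notMem (s : Finset T) (t : T) (q : ℕ) :
    {F ∈ s.powersetCard q | t ∉ F} = (s.erase t).powersetCard q := by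
  ext F
  simp only [mem_filter, mem_powersetCard, subset_erase]
  tauto

lemma card_powersetCard_filter_notMem_mul_card (ht : t ∈ s) (q : ℕ) :
    #{F ∈ s.powersetCard q | t ∉ F} * #s = #(s.powersetCard q) * (#s - q) := by
  rw [powersetCard_filter_notMem, card_powersetCard, card_powersetCard,
    ← card_erase_add_one ht, Nat.choose_mul_succ_eq]

lemma card_powersetCard_filter_notMem_le (ht : t ∈ s) {q : ℕ} {p : ℝ} (hp : p * #s ≤ q) :
    (#{F ∈ s.powersetCard q | t ∉ F} : ℝ) ≤ (1 - p) * #(s.powersetCard q) := by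
  obtain hq | hq := lt_or_ge #s q
  · simp [powersetCard_eq_empty.2 hq]
  have hs : (0 : ℝ) < #s := by exact_mod_cast card_pos.2 ⟨t, ht⟩
  refine le_of_mul_le_mul_right ?_ hs
  calc (#{F ∈ s.powersetCard q | t ∉ F} : ℝ) * #s
      = #(s.powersetCard q) * (#s - q) := by
        rw [← Nat.cast_sub hq]
        exact_mod_cast card_powersetCard_filter_notMem_mul_card ht q
    _ ≤ #(s.powersetCard q) * (#s - p * #s) := by gcongr
    _ = (1 - p) * #(s.powersetCard q) * #s := by ring

end Counting

lemma tendsto_pow_self_nhds_zero {R : Type*} [SeminormedRing R] {u : ℕ → R} {a : R}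
    (hu : Tendsto u atTop (𝓝 a)) (ha : ‖a‖ < 1) :
    Tendsto (fun n => u n ^ n) atTop (𝓝 0) := by
  obtain ⟨c, hac, hc1⟩ := exists_between ha
  refine squeeze_zero_norm' ?_ <|
    tendsto_pow_atTop_nhds_zero_of_lt_one ((norm_nonneg a).trans hac.le) hc1
  filter_upwards [hu.norm.eventually_le_const hac, eventually_gt_atTop 0] with n hn hn0
  exact (norm_pow_le' _ hn0).trans (pow_le_pow_left₀ (norm_nonneg _) hn n)

lemma tendsto_const_mul_rpow_pow_self_nhds_zero (c : ℝ) {β : ℝ} (hβ : β < 0) :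
    Tendsto (fun n : ℕ => (c * (n : ℝ) ^ β) ^ n) atTop (𝓝 0) := by
  have h_rpow : Tendsto (fun n : ℕ => (n : ℝ) ^ β) atTop (𝓝 0) := by
    simpa only [neg_neg] using!
      (tendsto_rpow_neg_atTop (neg_pos.2 hβ)).comp tendsto_natCast_atTop_atTop
  exact tendsto_pow_self_nhds_zero (by simpa using h_rpow.const_mul c) (by simp)

namespace RB

section FirstMoment

open Finset

variable {k n d q m : ℕ} {p : ℝ}

lemma sum_validConstraint {M : Type*} [AddCommMonoid M] (f : Constraint n d → M) :
    ∑ c : ValidConstraint k n d q, f c.1 =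
      ∑ s ∈ univ.powersetCard k, ∑ F ∈ univ.powersetCard q, f ⟨s, F⟩ := by
  rw [← sum_sigma (univ.powersetCard k) (fun _ => univ.powersetCard q) f]
  exact (sum_subtype _ (by simp) f).symm

lemma card_validConstraint :
    Fintype.card (ValidConstraint k n d q) =
      ∑ s ∈ (univ : Finset (Fin n)).powersetCard k,
        #((univ : Finset (↥s → Fin d)).powersetCard q) := by
  simp only [Fintype.card_eq_sum_ones, card_eq_sum_ones]
  exact sum_validConstraint fun _ => 1

open scoped Classical in
lemma card_filter_satisfies (a : Fin n → Fin d) :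
    #{c : ValidConstraint k n d q | satisfies a c.1} =
      ∑ s ∈ (univ : Finset (Fin n)).powersetCard k,
        #{F ∈ (univ : Finset (↥s → Fin d)).powersetCard q | (fun i : ↥s => a i) ∉ F} := by
  simp only [card_filter]
  convert sum_validConstraint fun c => if satisfies a c then 1 else 0

open scoped Classical in
lemma card_filter_satisfies_le (hp : p * (d : ℝ) ^ k ≤ q) (a : Fin n → Fin d) :
    (#{c : ValidConstraint k n d q | satisfies a c.1} : ℝ) ≤
      (1 - p) * Fintype.card (ValidConstraint k n d q) := by
  rw [card_filter_satisfies, card_validConstraint, Nat.cast_sum, Nat.cast_sum, mul_sum]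
  refine sum_le_sum fun s hs => card_powersetCard_filter_notMem_le (mem_univ _) ?_
  simpa [(mem_powersetCard.1 hs).2] using hp

open scoped Classical in
lemma card_filter_satInstance (a : Fin n → Fin d) :
    #{P : Instance k n d q m | satInstance a P} =
      #{c : ValidConstraint k n d q | satisfies a c.1} ^ m := by
  rw [← Fintype.card_piFinset_const]
  congr 1
  ext P
  simp only [mem_filter, mem_univ, true_and, Fintype.mem_piFinset]
  rfl

open scoped Classical in
lemma card_filter_exists_satInstance_le :
    #{P : Instance k n d q m | ∃ a, satInstance a P} ≤
      ∑ a : Fin n → Fin d, #{P : Instance k n d q m | satInstance a P} := by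
  refine (card_le_card fun P hP => ?_).trans card_biUnion_le
  simpa using hP

lemma prSat_nonneg : 0 ≤ prSat k n d q m := by
  unfold prSat
  positivity

lemma prSat_le (hp : p * (d : ℝ) ^ k ≤ q) (hp1 : p ≤ 1) :
    prSat k n d q m ≤ (d : ℝ) ^ n * (1 - p) ^ m := by
  classical
  have h_pow : 0 ≤ (1 - p) ^ m := pow_nonneg (sub_nonneg.2 hp1) m
  refine div_le_of_le_mul₀ (Nat.cast_nonneg _) (mul_nonneg (by positivity) h_pow) ?_
  calc (#{P : Instance k n d q m | ∃ a, satInstance a P} : ℝ)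
      ≤ ∑ a : Fin n → Fin d, (#{P : Instance k n d q m | satInstance a P} : ℝ) :=
        mod_cast card_filter_exists_satInstance_le
    _ = ∑ a : Fin n → Fin d, (#{c : ValidConstraint k n d q | satisfies a c.1} : ℝ) ^ m := by
        simp only [card_filter_satInstance, Nat.cast_pow]
    _ ≤ ∑ _a : Fin n → Fin d, ((1 - p) * Fintype.card (ValidConstraint k n d q)) ^ m := by
        gcongr with a
        exact card_filter_satisfies_le hp a
    _ = (d : ℝ) ^ n * (1 - p) ^ m * Fintype.card (Instance k n d q m) := by
        simp only [sum_const, card_univ, Fintype.card_fun, Fintype.card_fin, nsmul_eq_mul,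
          Nat.cast_pow, mul_pow, mul_assoc]

end FirstMoment

section Asymptotics

variable {k n : ℕ} {α r p : ℝ}

lemma dOf_le (hα : 0 ≤ α) (hn : 1 ≤ n) : (dOf α n : ℝ) ≤ 2 * (n : ℝ) ^ α := by
  have h_one : 1 ≤ (n : ℝ) ^ α := Real.one_le_rpow (mod_cast hn) hα
  have h_ceil : (dOf α n : ℝ) < (n : ℝ) ^ α + 1 := Nat.ceil_lt_add_one (by positivity)
  linarith

lemma pow_mOf_le {x : ℝ} (hx0 : 0 < x) (hx1 : x ≤ 1) (hn : 1 ≤ n) :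
    x ^ mOf r n ≤ ((n : ℝ) ^ (r * Real.log x)) ^ n := by
  have hn0 : (0 : ℝ) < n := mod_cast hn
  calc x ^ mOf r n = x ^ (mOf r n : ℝ) := (Real.rpow_natCast _ _).symm
    _ ≤ x ^ (r * n * Real.log n) := Real.rpow_le_rpow_of_exponent_ge hx0 hx1 (Nat.le_ceil _)
    _ = ((n : ℝ) ^ (r * Real.log x)) ^ n := by
      rw [← Real.rpow_mul_natCast hn0.le, Real.rpow_def_of_pos hx0, Real.rpow_def_of_pos hn0]
      ring_nf

lemma prSatRB_le (hα : 0 ≤ α) (hp0 : 0 ≤ p) (hp1 : p < 1) (hn : 1 ≤ n) :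
    prSatRB k α r p n ≤ (2 * (n : ℝ) ^ (α + r * Real.log (1 - p))) ^ n := by
  have hn0 : (0 : ℝ) < n := mod_cast hn
  calc prSatRB k α r p n
      ≤ (dOf α n : ℝ) ^ n * (1 - p) ^ mOf r n := prSat_le (Nat.le_ceil _) hp1.le
    _ ≤ (2 * (n : ℝ) ^ α) ^ n * ((n : ℝ) ^ (r * Real.log (1 - p))) ^ n := by
      gcongr
      · exact dOf_le hα hn
      · exact pow_mOf_le (sub_pos.2 hp1) (sub_le_self 1 hp0) hn
    _ = (2 * (n : ℝ) ^ (α + r * Real.log (1 - p))) ^ n := by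
      rw [← mul_pow, mul_assoc, ← Real.rpow_add hn0]

end Asymptotics

end RB

/-- The arity may grow with `n`. For `n < k n` there is no scope of size `k n` and
`RB.prSatRB` takes the junk value `0 / 0 = 0`. -/
theorem rb_unsat_above_threshold_general (k : ℕ → ℕ) (_hk : ∀ᶠ n in atTop, k n ≤ n) (α r p : ℝ)
    (hα : 0 < α) (hp0 : 0 < p) (hp1 : p < 1) (hcr : -α / Real.log (1 - p) < r) :
    Tendsto (fun n : ℕ => RB.prSatRB (k n) α r p n) atTop (𝓝 0) := by
  have hlog : Real.log (1 - p) < 0 := Real.log_neg (sub_pos.2 hp1) (sub_lt_self 1 hp0)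
  have h_exponent : α + r * Real.log (1 - p) < 0 := by
    linarith [(div_lt_iff_of_neg hlog).1 hcr]
  refine squeeze_zero' (.of_forall fun _ => RB.prSat_nonneg) ?_
    (tendsto_const_mul_rpow_pow_self_nhds_zero 2 h_exponent)
  filter_upwards [eventually_ge_atTop 1] with n hn
  exact RB.prSatRB_le hα.le hp0.le hp1 hn

/-- Above the threshold `r_cr = -α / ln (1-p)`, random instances of `RB(k,n,α,r,p)`
are almost surely unsatisfiable: for an integer `k ≥ 2` and real constants `α > 0`,
`r > 0` and `0 < p < 1` with `r > -α / ln (1-p)`, the probability that a random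
instance of `RB(k,n,α,r,p)` is satisfiable tends to `0` as `n → ∞`. -/
theorem rb_unsat_above_threshold (k : ℕ) (hk : 2 ≤ k) (α r p : ℝ)
    (hα : 0 < α) (hr : 0 < r) (hp0 : 0 < p) (hp1 : p < 1)
    (hcr : -α / Real.log (1 - p) < r) :
    Tendsto (fun n : ℕ => RB.prSatRB k α r p n) atTop (𝓝 0) :=
  rb_unsat_above_threshold_general (fun _ => k) (eventually_ge_atTop k) α r p hα hp0 hp1 hcr
end

section
/- Consider a single random RB constraint over n variables (k ≤ n) with common domain D of size d: its scope is a uniformly random set of k distinct variables, and its forbidden set is a uniformly random set of exactly q tuples from D^k (0 ≤ q ≤ d^k). Let t and t' be two total assignments that agree on exactly a variables (so a ≤ n), and set ρ = C(a,k)/C(n,k). Then the probability that both t and t' satisfy the constraint equals ρ·(1 - q/d^k) + (1-ρ)·C(d^k - 2, q)/C(d^k, q). -/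
open scoped Classical

/-
A scope is either contained in the agreement set of `t` and `t'`, which happens for `C(a,k)` of the
`C(n,k)` scopes, or it is not. In the first case the two assignments induce one tuple on it, in the
second case two, so the forbidden set is drawn from the remaining `d^k - 1`, respectively
`d^k - 2`, tuples. Averaging over the scopes gives the formula, since
`C(d^k - 1, q) / C(d^k, q) = 1 - q / d^k`.
-/

section PowersetCard

variable {α : Type*} [DecidableEq α]

theorem filter_subset_powersetCard (k : ℕ) (s t : Finset α) :
    {u ∈ s.powersetCard k | u ⊆ t} = (s ∩ t).powersetCard k := by
  ext u
  simp only [Finset.mem_filter, Finset.mem_powersetCard, Finset.subset_inter_iff]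
  tauto

theorem filter_disjoint_powersetCard (k : ℕ) (s t : Finset α) :
    {u ∈ s.powersetCard k | Disjoint u t} = (s \ t).powersetCard k := by
  ext u
  simp only [Finset.mem_filter, Finset.mem_powersetCard, Finset.subset_sdiff]
  tauto

theorem sum_powersetCard_ite_subset {R : Type*} [NonAssocRing R] (k : ℕ) (s t : Finset α)
    (x y : R) :
    ∑ u ∈ s.powersetCard k, (if u ⊆ t then x else y)
      = ((s ∩ t).card.choose k : R) * x
        + ((s.card.choose k : R) - ((s ∩ t).card.choose k : R)) * y := by
  have card_inside : {u ∈ s.powersetCard k | u ⊆ t}.card = (s ∩ t).card.choose k := by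
    rw [filter_subset_powersetCard, Finset.card_powersetCard]
  have card_outside : (s ∩ t).card.choose k + {u ∈ s.powersetCard k | ¬u ⊆ t}.card
      = s.card.choose k := by
    rw [← card_inside, Finset.card_filter_add_card_filter_not, Finset.card_powersetCard]
  rw [Finset.sum_ite, Finset.sum_const, Finset.sum_const, nsmul_eq_mul, nsmul_eq_mul, card_inside,
    ← card_outside, Nat.cast_add, add_sub_cancel_left]

end PowersetCard

theorem choose_sub_one_div_choose {K : Type*} [Field K] [CharZero K] {N q : ℕ} (hq : q ≤ N) :
    ((N - 1).choose q : K) / (N.choose q : K) = 1 - (q : K) / (N : K) := by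
  cases N with
  | zero =>
    -- Here `N - 1 = 0` and `q / N = 0`, so both sides are `1`.
    simp [Nat.le_zero.mp hq]
  | succ M =>
    have choose_ne_zero : ((M + 1).choose q : K) ≠ 0 := by
      exact_mod_cast (Nat.choose_pos hq).ne'
    have succ_ne_zero : ((M + 1 : ℕ) : K) ≠ 0 := by exact_mod_cast M.succ_ne_zero
    have absorption : (M.choose q : K) * ((M + 1 : ℕ) : K)
        = (((M + 1 : ℕ) : K) - q) * ((M + 1).choose q : K) := by
      rw [← Nat.cast_sub hq, mul_comm ((M + 1 - q : ℕ) : K)]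
      exact_mod_cast Nat.choose_mul_succ_eq M q
    rw [Nat.add_sub_cancel, one_sub_div succ_ne_zero, div_eq_div_iff choose_ne_zero succ_ne_zero,
      absorption]

namespace RB

/-- The set of variables on which two assignments agree: the scopes inside it are exactly those on
which the two assignments induce the same tuple. -/
def agreementSet {ι δ : Type*} [Fintype ι] [DecidableEq δ] (t t' : ι → δ) : Finset ι :=
  Finset.univ.filter fun i => t i = t' i

theorem subset_agreementSet_iff {ι δ : Type*} [Fintype ι] [DecidableEq δ] {t t' : ι → δ}
    {s : Finset ι} : s ⊆ agreementSet t t' ↔ s.restrict t = s.restrict t' := by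
  simp only [agreementSet, Finset.subset_iff, Finset.mem_filter, Finset.mem_univ, true_and,
    funext_iff, Subtype.forall, Finset.restrict]

variable {n d : ℕ}

theorem card_validConstraint_filter (k q : ℕ) (P : Constraint n d → Prop) [DecidablePred P] :
    (Finset.univ.filter fun c : ValidConstraint k n d q => P c.1).card
      = ∑ s ∈ (Finset.univ : Finset (Fin n)).powersetCard k,
          {F ∈ (Finset.univ : Finset (s → Fin d)).powersetCard q | P ⟨s, F⟩}.card := by
  rw [← Finset.card_sigma]
  refine Finset.card_nbij Subtype.val ?_ Subtype.val_injective.injOn ?_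
  · rintro ⟨⟨s, F⟩, hs, hF⟩ hP
    simpa [hs, hF] using hP
  · rintro ⟨s, F⟩ hsF
    obtain ⟨hs, hF, hP⟩ : s.card = k ∧ F.card = q ∧ P ⟨s, F⟩ := by simpa using hsF
    exact ⟨⟨⟨s, F⟩, hs, hF⟩, by simpa using hP, rfl⟩

theorem card_validConstraint_s8 (k n d q : ℕ) :
    Fintype.card (ValidConstraint k n d q) = n.choose k * (d ^ k).choose q := by
  have card_forbidden : ∀ s ∈ (Finset.univ : Finset (Fin n)).powersetCard k,
      ((Finset.univ : Finset (s → Fin d)).powersetCard q).card = (d ^ k).choose q := by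
    intro s hs
    rw [Finset.card_powersetCard, Finset.card_univ, Fintype.card_fun, Fintype.card_fin,
      Fintype.card_coe, (Finset.mem_powersetCard.mp hs).2]
  calc Fintype.card (ValidConstraint k n d q)
      = ∑ s ∈ (Finset.univ : Finset (Fin n)).powersetCard k,
          ((Finset.univ : Finset (s → Fin d)).powersetCard q).card := by
        simpa only [Finset.filter_true, Finset.card_univ] using
          card_validConstraint_filter (n := n) (d := d) k q fun _ => True
    _ = n.choose k * (d ^ k).choose q := by
        rw [Finset.sum_congr rfl card_forbidden, Finset.sum_const, smul_eq_mul,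
          Finset.card_powersetCard, Finset.card_univ, Fintype.card_fin]

theorem satisfies_and_satisfies_iff_disjoint {t t' : Fin n → Fin d} {s : Finset (Fin n)}
    {F : Finset (s → Fin d)} :
    satisfies t ⟨s, F⟩ ∧ satisfies t' ⟨s, F⟩ ↔ Disjoint F {s.restrict t, s.restrict t'} := by
  rw [Finset.disjoint_insert_right, Finset.disjoint_singleton_right]
  rfl

theorem card_forbidden_satisfies_pair (q : ℕ) (t t' : Fin n → Fin d) (s : Finset (Fin n)) :
    {F ∈ (Finset.univ : Finset (s → Fin d)).powersetCard q |
      satisfies t ⟨s, F⟩ ∧ satisfies t' ⟨s, F⟩}.card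
      = if s ⊆ agreementSet t t' then (d ^ s.card - 1).choose q
        else (d ^ s.card - 2).choose q := by
  have card_avoiding :
      {F ∈ (Finset.univ : Finset (s → Fin d)).powersetCard q |
        satisfies t ⟨s, F⟩ ∧ satisfies t' ⟨s, F⟩}.card
        = (d ^ s.card - ({s.restrict t, s.restrict t'} : Finset (s → Fin d)).card).choose q := by
    simp only [satisfies_and_satisfies_iff_disjoint, filter_disjoint_powersetCard,
      Finset.card_powersetCard, Finset.card_univ_sdiff, Fintype.card_fun, Fintype.card_fin,
      Fintype.card_coe]
  rw [card_avoiding]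
  split_ifs with hs
  · rw [subset_agreementSet_iff.mp hs, Finset.pair_eq_singleton, Finset.card_singleton]
  · rw [Finset.card_pair (mt subset_agreementSet_iff.mpr hs)]

theorem card_validConstraint_satisfies_pair {R : Type*} [NonAssocRing R] (k q : ℕ)
    (t t' : Fin n → Fin d) :
    ((Finset.univ.filter fun c : ValidConstraint k n d q =>
        satisfies t c.1 ∧ satisfies t' c.1).card : R)
      = ((agreementSet t t').card.choose k : R) * ((d ^ k - 1).choose q : R)
        + ((n.choose k : R) - ((agreementSet t t').card.choose k : R))
          * ((d ^ k - 2).choose q : R) := by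
  have card_forbidden : ∀ s ∈ (Finset.univ : Finset (Fin n)).powersetCard k,
      ({F ∈ (Finset.univ : Finset (s → Fin d)).powersetCard q |
        satisfies t ⟨s, F⟩ ∧ satisfies t' ⟨s, F⟩}.card : R)
        = if s ⊆ agreementSet t t' then ((d ^ k - 1).choose q : R)
          else ((d ^ k - 2).choose q : R) := by
    intro s hs
    rw [card_forbidden_satisfies_pair, (Finset.mem_powersetCard.mp hs).2, Nat.cast_ite]
  rw [card_validConstraint_filter k q fun c => satisfies t c ∧ satisfies t' c, Nat.cast_sum,
    Finset.sum_congr rfl card_forbidden, sum_powersetCard_ite_subset, Finset.univ_inter,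
    Finset.card_univ, Fintype.card_fin]

end RB

/-- **Probability that two assignments both satisfy a single random RB constraint**:
for a uniformly random constraint over `n` variables (`k ≤ n`) with common domain of
size `d` (its scope a uniformly random set of `k` distinct variables and its forbidden
set a uniformly random set of exactly `q ≤ d^k` tuples), if the total assignments `t`
and `t'` agree on exactly `a` variables, then, with `ρ = C(a,k)/C(n,k)`, the probability
that both `t` and `t'` satisfy the constraint equals
`ρ·(1 - q/d^k) + (1-ρ)·C(d^k - 2, q)/C(d^k, q)`. -/
theorem rb_constraint_pair_probability (k n d q a : ℕ) (hkn : k ≤ n) (hq : q ≤ d ^ k)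
    (t t' : Fin n → Fin d)
    (ha : (Finset.univ.filter fun i : Fin n => t i = t' i).card = a) :
    ((Finset.univ.filter fun c : RB.ValidConstraint k n d q =>
        RB.satisfies t c.1 ∧ RB.satisfies t' c.1).card : ℝ)
      / (Fintype.card (RB.ValidConstraint k n d q))
    = ((a.choose k : ℝ) / (n.choose k)) * (1 - (q : ℝ) / (d : ℝ) ^ k)
      + (1 - (a.choose k : ℝ) / (n.choose k)) *
          (((d ^ k - 2).choose q : ℝ) / ((d ^ k).choose q)) := by
  have scopes_ne_zero : (n.choose k : ℝ) ≠ 0 := by exact_mod_cast (Nat.choose_pos hkn).ne'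
  have ratio : ((d ^ k - 1).choose q : ℝ) / ((d ^ k).choose q) = 1 - (q : ℝ) / (d : ℝ) ^ k := by
    exact_mod_cast choose_sub_one_div_choose hq
  have agree_card : (RB.agreementSet t t').card = a := ha
  rw [RB.card_validConstraint_satisfies_pair, RB.card_validConstraint_s8, agree_card, ← ratio,
    Nat.cast_mul]
  field_simp
end
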